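/- arXiv:math/0108144 — 2 statements merged into one kernel-verified Lean document; each statement's English description precedes it below -/
import Mathlib

section
/- Proposition 3 (formal version — the ⟨s⟩-adic and ⟨x⟩-adic topologies on the formal Brieskorn lattice coincide): for every k ≥ 1 one has the sandwich of ℂ[[s]]-submodules ⟨x₁,…,xₙ⟩^{2km}·A + M ⊆ s^k·A + M ⊆ ⟨x₁,…,xₙ⟩^k·A + M, where m ≥ 1 is such that ⟨x₁,…,xₙ⟩^m ⊆ J(f) and ⟨x₁,…,xₙ⟩·A denotes the ideal of A generated by x₁,…,xₙ. Consequently the filtrations (s^k·H)_k and (image of ⟨x₁,…,xₙ⟩^k·A in H)_k of H = A/M define the same topology. -/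
noncomputable section

open scoped Pointwise

/-- The formal partial derivative `∂ᵢ` with respect to the `i`th variable, determined by
`coeff α (∂ᵢ g) = (α i + 1) • coeff (α + eᵢ) g`. -/
def pd {σ : Type*} (i : σ) (g : MvPowerSeries σ ℂ) : MvPowerSeries σ ℂ :=
  fun α => ((α i : ℂ) + 1) * MvPowerSeries.coeff (α + Finsupp.single i 1) g

lemma coeff_pd {σ : Type*} (i : σ) (g : MvPowerSeries σ ℂ) (α : σ →₀ ℕ) :
    MvPowerSeries.coeff α (pd i g) =
      ((α i : ℂ) + 1) * MvPowerSeries.coeff (α + Finsupp.single i 1) g := rfl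

variable (n : ℕ)

/-- `R = ℂ[[x₁,…,xₙ]]`. -/
abbrev R' := MvPowerSeries (Fin n) ℂ

/-- `A = ℂ[[s,x₁,…,xₙ]]`, where `s` is the 0th variable and `xᵢ` is the variable
of index `i` (`1 ≤ i ≤ n`). -/
abbrev A' := MvPowerSeries (Fin (n + 1)) ℂ

/-- The variable `s` of `A`. -/
def sv : A' n := MvPowerSeries.X 0

/-- Forget the `s`-exponent of a multi-index of `A`. -/
def tailF (β : Fin (n + 1) →₀ ℕ) : Fin n →₀ ℕ :=
  Finsupp.equivFunOnFinite.symm fun i => β i.succ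

/-- The inclusion `R ⊆ A` as the subring of series not involving `s`. -/
def inclR (g : R' n) : A' n :=
  fun β => if β 0 = 0 then MvPowerSeries.coeff (tailF n β) g else 0

/-- The inclusion `ℂ[[s]] ⊆ A` as the subring of series in `s` alone. -/
def toA (p : PowerSeries ℂ) : A' n :=
  fun β => if tailF n β = 0 then PowerSeries.coeff (β 0) p else 0

lemma coeff_inclR (g : R' n) (β : Fin (n + 1) →₀ ℕ) :
    MvPowerSeries.coeff β (inclR n g) =
      if β 0 = 0 then MvPowerSeries.coeff (tailF n β) g else 0 := rfl

/-- The `ℂ[[s]]`-linear operator `Fᵢ(g) = ∂ᵢ(f)·g − s·∂ᵢ(g)` on `A`. -/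
def FF (f : R' n) (i : Fin n) (g : A' n) : A' n :=
  inclR n (pd i f) * g - sv n * pd i.succ g

/-- `M = range F₁ + ⋯ + range Fₙ`, so that `H = A/M` is the formal Brieskorn lattice. -/
def Mset (f : R' n) : Set (A' n) :=
  {a | ∃ q : Fin n → A' n, a = ∑ i, FF n f i (q i)}

/-- The Jacobian ideal `J(f) = ⟨∂₁f,…,∂ₙf⟩` of `R`. -/
def Jf (f : R' n) : Ideal (R' n) :=
  Ideal.span (Set.range fun i : Fin n => pd i f)

/-- The maximal ideal `⟨x₁,…,xₙ⟩` of `R = ℂ[[x₁,…,xₙ]]`. -/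
def mx : Ideal (R' n) :=
  Ideal.span (Set.range (MvPowerSeries.X : Fin n → R' n))

/-- The ideal `J(f)·A` of `A` generated by `∂₁(f),…,∂ₙ(f)`. -/
def JA (f : R' n) : Ideal (A' n) :=
  Ideal.span (Set.range fun i : Fin n => inclR n (pd i f))

/-- The ideal `⟨x₁,…,xₙ⟩·A` of `A` generated by the variables `x₁,…,xₙ` (not `s`). -/
def XA : Ideal (A' n) :=
  Ideal.span (Set.range fun i : Fin n => (MvPowerSeries.X i.succ : A' n))

lemma pd_add {σ : Type*} (i : σ) (a b : MvPowerSeries σ ℂ) :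
    pd i (a + b) = pd i a + pd i b := by
  ext α; simp [coeff_pd, mul_add]

lemma pd_smul {σ : Type*} (i : σ) (c : ℂ) (a : MvPowerSeries σ ℂ) :
    pd i (c • a) = c • pd i a := by
  ext α; simp [coeff_pd]; ring

lemma FF_add (f : R' n) (i : Fin n) (a b : A' n) :
    FF n f i (a + b) = FF n f i a + FF n f i b := by
  simp only [FF, pd_add, mul_add]; ring

lemma FF_smul (f : R' n) (i : Fin n) (c : ℂ) (a : A' n) :
    FF n f i (c • a) = c • FF n f i a := by
  simp only [FF, pd_smul, Algebra.mul_smul_comm, smul_sub]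

lemma FF_zero (f : R' n) (i : Fin n) : FF n f i 0 = 0 := by
  simpa using FF_smul n f i 0 0

/-- `M` as a `ℂ`-submodule of `A`. -/
def Msub (f : R' n) : Submodule ℂ (A' n) where
  carrier := Mset n f
  zero_mem' := ⟨0, by simp [FF_zero]⟩
  add_mem' := by
    rintro a b ⟨q, rfl⟩ ⟨q', rfl⟩
    exact ⟨q + q', by simp [FF_add, Finset.sum_add_distrib]⟩
  smul_mem' := by
    rintro c a ⟨q, rfl⟩
    exact ⟨c • q, by simp [FF_smul, Finset.smul_sum]⟩

/-- The inclusion `R ⊆ A` as a `ℂ`-linear map. -/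
def inclL : R' n →ₗ[ℂ] A' n where
  toFun := inclR n
  map_add' a b := by
    ext β; simp only [coeff_inclR, map_add]; split <;> simp
  map_smul' c a := by
    ext β; simp only [coeff_inclR, map_smul, RingHom.id_apply]; split <;> simp

lemma coeff_Xmul (i : Fin (n + 1)) (g : A' n) (β : Fin (n + 1) →₀ ℕ) :
    MvPowerSeries.coeff β (MvPowerSeries.X i * g) =
      if 1 ≤ β i then MvPowerSeries.coeff (β - Finsupp.single i 1) g else 0 := by
  rw [MvPowerSeries.X_def, MvPowerSeries.coeff_monomial_mul]
  simp only [Finsupp.single_le_iff, one_mul]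

/-- degree in the `x` variables -/
def tdeg (β : Fin (n + 1) →₀ ℕ) : ℕ := ∑ i : Fin n, β i.succ

lemma tdeg_add (a b : Fin (n + 1) →₀ ℕ) : tdeg n (a + b) = tdeg n a + tdeg n b := by
  simp [tdeg, Finset.sum_add_distrib]

lemma tdeg_single (i : Fin n) (c : ℕ) : tdeg n (Finsupp.single i.succ c) = c := by
  simp [tdeg, Finsupp.single_apply]

/-- series of `x`-order at least `j` -/
def XOrd (j : ℕ) : Ideal (A' n) where
  carrier := {g | ∀ β, tdeg n β < j → MvPowerSeries.coeff β g = 0}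
  zero_mem' := by intro β _; simp
  add_mem' := by
    intro a b ha hb β h
    rw [map_add, ha β h, hb β h, add_zero]
  smul_mem' := by
    intro c a ha β h
    rw [smul_eq_mul, MvPowerSeries.coeff_mul]
    apply Finset.sum_eq_zero
    intro p hp
    rw [Finset.HasAntidiagonal.mem_antidiagonal] at hp
    rw [ha p.2 (by rw [← hp, tdeg_add] at h; omega), mul_zero]

lemma mem_Ord (j : ℕ) (g : A' n) :
    g ∈ XOrd n j ↔ ∀ β, tdeg n β < j → MvPowerSeries.coeff β g = 0 := Iff.rfl

lemma X_mul_XOrd (i : Fin n) (j : ℕ) (g : A' n) (hg : g ∈ XOrd n j) :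
    MvPowerSeries.X i.succ * g ∈ XOrd n (j + 1) := by
  intro β h
  rw [coeff_Xmul]
  split_ifs with h1
  · apply hg
    have : β = (β - Finsupp.single i.succ 1) + Finsupp.single i.succ 1 :=
      (tsub_add_cancel_of_le (by simpa using h1)).symm
    rw [this, tdeg_add, tdeg_single] at h
    omega
  · rfl

lemma XA_pow_le (j : ℕ) : XA n ^ j ≤ XOrd n j := by
  induction j with
  | zero => intro g _ β h; omega
  | succ j ih =>
    rw [pow_succ', Ideal.mul_le]
    intro r hr g hg
    have hg := ih hg
    unfold XA at hr
    induction hr using Submodule.span_induction with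
    | mem x hx =>
      obtain ⟨i, rfl⟩ := hx
      exact X_mul_XOrd n i j g hg
    | zero => simp
    | add x y _ _ hx hy => rw [add_mul]; exact add_mem hx hy
    | smul a x _ hx => rw [smul_mul_assoc]; exact Submodule.smul_mem _ _ hx

lemma Ord_le (j : ℕ) : XOrd n j ≤ XA n ^ j := by
  induction j with
  | zero => simp
  | succ j ih =>
    intro g hg
    have hφ : ∀ β : Fin (n + 1) →₀ ℕ, ∃ i : Option (Fin n),
        (tdeg n β = 0 ∧ i = none) ∨ (∃ t : Fin n, i = some t ∧ 1 ≤ β t.succ) := by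
      intro β
      by_cases h : tdeg n β = 0
      · exact ⟨none, Or.inl ⟨h, rfl⟩⟩
      · have : ∃ t : Fin n, β t.succ ≠ 0 := by
          by_contra hc
          push Not at hc
          exact h (by simp [tdeg, hc])
        obtain ⟨t, ht⟩ := this
        exact ⟨some t, Or.inr ⟨t, rfl, by omega⟩⟩
    choose φ hφ using hφ
    let q : Fin n → A' n := fun i β =>
      if φ (β + Finsupp.single i.succ 1) = some i then
        MvPowerSeries.coeff (β + Finsupp.single i.succ 1) g else 0
    have hq : ∀ i β, MvPowerSeries.coeff β (q i) =
      if φ (β + Finsupp.single i.succ 1) = some i then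
        MvPowerSeries.coeff (β + Finsupp.single i.succ 1) g else 0 := fun _ _ => rfl
    have hsum : g = ∑ i, MvPowerSeries.X i.succ * q i := by
      ext β
      rw [map_sum]
      have key : ∀ i : Fin n, MvPowerSeries.coeff β (MvPowerSeries.X i.succ * q i) =
          if φ β = some i then MvPowerSeries.coeff β g else 0 := by
        intro i
        rw [coeff_Xmul]
        by_cases h1 : 1 ≤ β i.succ
        · have : (β - Finsupp.single i.succ 1) + Finsupp.single i.succ 1 = β :=
            tsub_add_cancel_of_le (by simpa using h1)
          rw [if_pos h1, hq, this]
        · rw [if_neg h1, if_neg]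
          intro h2
          rcases hφ β with ⟨_, h⟩ | ⟨t, ht, h⟩
          · simp [h2] at h
          · rw [h2, Option.some_inj] at ht
            subst ht
            exact h1 h
      simp only [key]
      rcases hφ β with ⟨h0, h⟩ | ⟨t, ht, h⟩
      · simp [h, hg β (by omega)]
      · simp [ht]
    rw [hsum, pow_succ']
    refine Ideal.sum_mem _ fun i _ => Ideal.mul_mem_mul (Ideal.subset_span ⟨i, rfl⟩) (ih ?_)
    intro β h
    rw [hq]
    split_ifs
    · apply hg
      rw [tdeg_add, tdeg_single]
      omega
    · rfl

lemma XA_pow_eq (j : ℕ) : XA n ^ j = XOrd n j := le_antisymm (XA_pow_le n j) (Ord_le n j)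

lemma pd_mem (i : Fin n) (j : ℕ) (g : A' n) (hg : g ∈ XA n ^ (j + 1)) :
    pd i.succ g ∈ XA n ^ j := by
  rw [XA_pow_eq] at *
  intro β h
  rw [coeff_pd, hg _ (by rw [tdeg_add, tdeg_single]; omega), mul_zero]

lemma exists_int (i : Fin n) (j : ℕ) (g : A' n) (hg : g ∈ XA n ^ j) :
    ∃ h ∈ XA n ^ (j + 1), pd i.succ h = g := by
  let u : A' n := fun β => ((β i.succ : ℂ) + 1)⁻¹ * MvPowerSeries.coeff β g
  have hu : ∀ β, MvPowerSeries.coeff β u =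
    ((β i.succ : ℂ) + 1)⁻¹ * MvPowerSeries.coeff β g := fun _ => rfl
  refine ⟨MvPowerSeries.X i.succ * u, ?_, ?_⟩
  · rw [XA_pow_eq] at *
    apply X_mul_XOrd
    intro β h
    rw [hu, hg β h, mul_zero]
  · ext β
    have : ((β i.succ : ℂ) + 1) ≠ 0 := Nat.cast_add_one_ne_zero _
    rw [coeff_pd, coeff_Xmul, if_pos (by simp), add_tsub_cancel_right, hu]
    field_simp

lemma pd_s (i : Fin n) (g : A' n) : pd i.succ (sv n * g) = sv n * pd i.succ g := by
  ext β
  have e : (β + Finsupp.single i.succ 1 : Fin (n + 1) →₀ ℕ) 0 = β 0 := by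
    simp [Finsupp.single_apply]
  rw [coeff_pd, sv, coeff_Xmul, coeff_Xmul, e]
  split_ifs with h
  · have e2 : β + Finsupp.single i.succ 1 - Finsupp.single 0 1 =
        β - Finsupp.single 0 1 + Finsupp.single i.succ 1 :=
      tsub_add_eq_add_tsub (by simpa using h) |>.symm
    have e3 : (β - Finsupp.single 0 1 : Fin (n + 1) →₀ ℕ) i.succ = β i.succ := by
      simp [Finsupp.single_apply, (Fin.succ_ne_zero i).symm]
    rw [coeff_pd, e2, e3]
  · simp

lemma s_M (f : R' n) (a : A' n) (ha : a ∈ Msub n f) : sv n * a ∈ Msub n f := by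
  obtain ⟨q, rfl⟩ := ha
  refine ⟨fun i => sv n * q i, ?_⟩
  rw [Finset.mul_sum]
  refine Finset.sum_congr rfl fun i _ => ?_
  simp only [FF, pd_s]
  ring

lemma spow_M (f : R' n) (k : ℕ) (a : A' n) (ha : a ∈ Msub n f) :
    sv n ^ k * a ∈ Msub n f := by
  induction k with
  | zero => simpa
  | succ k ih => rw [pow_succ', mul_assoc]; exact s_M n f _ ih

lemma FF_mem (f : R' n) (i : Fin n) (g : A' n) : FF n f i g ∈ Msub n f := by
  refine ⟨Pi.single i g, ?_⟩
  rw [Finset.sum_eq_single i]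
  · simp
  · intro b _ hb
    simp [Pi.single_eq_of_ne hb, FF_zero]
  · simp

lemma inclR_mul (a b : R' n) : inclR n (a * b) = inclR n a * inclR n b := by
  have htail : ∀ β : Fin (n + 1) →₀ ℕ, tailF n β = Finsupp.tail β := by
    intro β; ext i; simp [tailF, Finsupp.tail_apply]
  ext β
  rw [coeff_inclR, MvPowerSeries.coeff_mul, MvPowerSeries.coeff_mul]
  split_ifs with h
  · symm
    refine Finset.sum_nbij' (fun p => (tailF n p.1, tailF n p.2))
      (fun p => (Finsupp.cons 0 p.1, Finsupp.cons 0 p.2)) ?_ ?_ ?_ ?_ ?_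
    · intro p hp
      rw [Finset.HasAntidiagonal.mem_antidiagonal] at *
      rw [← hp]; ext i; simp [tailF]
    · intro p hp
      rw [Finset.HasAntidiagonal.mem_antidiagonal] at *
      ext i
      refine Fin.cases ?_ (fun t => ?_) i
      · simp [h]
      · have := DFunLike.congr_fun hp t
        simpa [tailF] using this
    · intro p hp
      rw [Finset.HasAntidiagonal.mem_antidiagonal] at hp
      have h0 := DFunLike.congr_fun hp 0
      simp only [Finsupp.add_apply, h] at h0
      ext i
      · refine Fin.cases ?_ (fun t => ?_) i
        · simp; omega
        · simp [tailF]
      · refine Fin.cases ?_ (fun t => ?_) i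
        · simp; omega
        · simp [tailF]
    · intro p hp
      simp [htail]
    · intro p hp
      rw [Finset.HasAntidiagonal.mem_antidiagonal] at hp
      have h0 := DFunLike.congr_fun hp 0
      simp only [Finsupp.add_apply, h] at h0
      rw [coeff_inclR, coeff_inclR, if_pos (by omega), if_pos (by omega)]
  · symm
    apply Finset.sum_eq_zero
    intro p hp
    rw [Finset.HasAntidiagonal.mem_antidiagonal] at hp
    have h0 := DFunLike.congr_fun hp 0
    simp only [Finsupp.add_apply] at h0
    rw [coeff_inclR, coeff_inclR]
    by_cases h1 : p.1 0 = 0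
    · rw [if_neg (show ¬ p.2 0 = 0 by omega), mul_zero]
    · rw [if_neg h1, zero_mul]

lemma inclR_one : inclR n 1 = 1 := by
  ext β
  rw [coeff_inclR, MvPowerSeries.coeff_one, MvPowerSeries.coeff_one]
  have : β = 0 ↔ β 0 = 0 ∧ tailF n β = 0 := by
    simp only [Finsupp.ext_iff, Fin.forall_fin_succ]
    simp [tailF]
  by_cases h : β 0 = 0 <;> simp [this, h]

/-- the inclusion as a ring homomorphism -/
def inclH : R' n →+* A' n where
  toFun := inclR n
  map_one' := inclR_one n
  map_mul' := inclR_mul n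
  map_zero' := (inclL n).map_zero
  map_add' := (inclL n).map_add

lemma inclR_X (i : Fin n) : inclR n (MvPowerSeries.X i) = MvPowerSeries.X i.succ := by
  ext β
  rw [coeff_inclR, MvPowerSeries.coeff_X, MvPowerSeries.coeff_X]
  have : β = Finsupp.single i.succ 1 ↔ β 0 = 0 ∧ tailF n β = Finsupp.single i 1 := by
    simp only [Finsupp.ext_iff, Fin.forall_fin_succ]
    simp [tailF, Finsupp.single_apply]
  by_cases h : β 0 = 0 <;> simp [this, h]

lemma XA_pow_le_JA (f : R' n) (m : ℕ) (hiso : mx n ^ m ≤ Jf n f) : XA n ^ m ≤ JA n f := by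
  have h1 : XA n = (mx n).map (inclH n) := by
    rw [mx, Ideal.map_span, ← Set.range_comp, XA]
    congr 2
    funext i
    exact (inclR_X n i).symm
  have h2 : JA n f = (Jf n f).map (inclH n) := by
    rw [Jf, Ideal.map_span, ← Set.range_comp, JA]
    rfl
  rw [h1, h2, ← Ideal.map_pow]
  exact Ideal.map_mono hiso

lemma step1 (f : R' n) (m : ℕ) (hiso : mx n ^ m ≤ Jf n f) (j : ℕ) (a : A' n)
    (ha : a ∈ XA n ^ (m + (j + 1))) : ∃ b ∈ XA n ^ j, a - sv n * b ∈ Msub n f := by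
  rw [pow_add] at ha
  replace ha : a ∈ JA n f * XA n ^ (j + 1) := Ideal.mul_mono_left (XA_pow_le_JA n f m hiso) ha
  induction ha using Submodule.mul_induction_on' with
  | mem_mul_mem r hr g hg =>
    unfold JA at hr
    induction hr using Submodule.span_induction generalizing g with
    | mem x hx =>
      obtain ⟨i, rfl⟩ := hx
      exact ⟨pd i.succ g, pd_mem n i j g hg, FF_mem n f i g⟩
    | zero => exact ⟨0, zero_mem _, by simp⟩
    | add x y _ _ hx hy =>
      obtain ⟨b, hb, hb'⟩ := hx g hg
      obtain ⟨c, hc, hc'⟩ := hy g hg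
      refine ⟨b + c, add_mem hb hc, ?_⟩
      convert add_mem hb' hc' using 1
      ring
    | smul t x _ hx =>
      obtain ⟨b, hb, hb'⟩ := hx (t * g) (Ideal.mul_mem_left _ _ hg)
      refine ⟨b, hb, ?_⟩
      convert hb' using 1
      rw [smul_eq_mul]
      ring
  | add x _ y _ hx hy =>
    obtain ⟨b, hb, hb'⟩ := hx
    obtain ⟨c, hc, hc'⟩ := hy
    refine ⟨b + c, add_mem hb hc, ?_⟩
    convert add_mem hb' hc' using 1
    ring

lemma iter1 (f : R' n) (m : ℕ) (hiso : mx n ^ m ≤ Jf n f) (k : ℕ) : ∀ a : A' n,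
    a ∈ XA n ^ (k * (m + 1)) → ∃ b, a - sv n ^ k * b ∈ Msub n f := by
  induction k with
  | zero => intro a _; exact ⟨a, by simp⟩
  | succ k ih =>
    intro a ha
    obtain ⟨b, hb, hb'⟩ := step1 n f m hiso (k * (m + 1)) a
      (by convert ha using 2; ring)
    obtain ⟨c, hc⟩ := ih b hb
    refine ⟨c, ?_⟩
    convert add_mem hb' (s_M n f _ hc) using 1
    ring

lemma step2 (f : R' n) (i : Fin n) (j : ℕ) (a : A' n) (ha : a ∈ XA n ^ j) :
    ∃ b ∈ XA n ^ (j + 1), sv n * a - b ∈ Msub n f := by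
  obtain ⟨h, hh, rfl⟩ := exists_int n i j a ha
  refine ⟨inclR n (pd i f) * h, Ideal.mul_mem_left _ _ hh, ?_⟩
  convert neg_mem (FF_mem n f i h) using 1
  rw [FF]
  ring

lemma iter2 (f : R' n) (i : Fin n) (k : ℕ) (a : A' n) :
    ∃ b ∈ XA n ^ k, sv n ^ k * a - b ∈ Msub n f := by
  induction k with
  | zero => exact ⟨a, by simp, by simp⟩
  | succ k ih =>
    obtain ⟨b, hb, hb'⟩ := ih
    obtain ⟨c, hc, hc'⟩ := step2 n f i k b hb
    refine ⟨c, hc, ?_⟩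
    convert add_mem (s_M n f _ hb') hc' using 1
    ring

/-- **Proposition 3 (formal version)**: for every `k ≥ 1` one has the sandwich
`⟨x₁,…,xₙ⟩^{2km}·A + M ⊆ s^k·A + M ⊆ ⟨x₁,…,xₙ⟩^k·A + M`; hence the `⟨s⟩`-adic and
`⟨x⟩`-adic topologies on the formal Brieskorn lattice `H = A/M` coincide. -/
theorem brieskorn_topologies_coincide (n : ℕ) (hn : 1 ≤ n) (f : R' n)
    (hf0 : MvPowerSeries.constantCoeff f = 0)
    (m : ℕ) (hm : 1 ≤ m) (hiso : mx n ^ m ≤ Jf n f) :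
    ∀ k : ℕ, 1 ≤ k →
      ((XA n ^ (2 * k * m) : Ideal (A' n)) : Set (A' n)) + Mset n f ⊆
        ((Ideal.span {sv n ^ k} : Ideal (A' n)) : Set (A' n)) + Mset n f ∧
      ((Ideal.span {sv n ^ k} : Ideal (A' n)) : Set (A' n)) + Mset n f ⊆
        ((XA n ^ k : Ideal (A' n)) : Set (A' n)) + Mset n f := by
  intro k _
  constructor
  · rintro _ ⟨a, ha, c, hc, rfl⟩
    have ha : a ∈ XA n ^ (2 * k * m) := ha
    have hc : c ∈ Msub n f := hc
    have hle : k * (m + 1) ≤ 2 * k * m := by nlinarith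
    obtain ⟨b, hb⟩ := iter1 n f m hiso k a (Ideal.pow_le_pow_right hle ha)
    refine ⟨sv n ^ k * b, Ideal.mul_mem_right _ _ (Ideal.subset_span rfl),
      a - sv n ^ k * b + c, add_mem hb hc, ?_⟩
    change sv n ^ k * b + (a - sv n ^ k * b + c) = a + c
    ring
  · rintro _ ⟨a, ha, c, hc, rfl⟩
    have hc : c ∈ Msub n f := hc
    obtain ⟨t, rfl⟩ := Ideal.mem_span_singleton'.mp ha
    obtain ⟨b, hb, hb'⟩ := iter2 n f ⟨0, hn⟩ k t
    refine ⟨b, hb, sv n ^ k * t - b + c, add_mem hb' hc, ?_⟩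
    change b + (sv n ^ k * t - b + c) = t * sv n ^ k + c
    ring
end
end

section
/- Proposition 21 (freeness of the formal Brieskorn lattice): the formal Brieskorn lattice H = A/M is a free ℂ[[s]]-module of rank μ, i.e. H is isomorphic as a ℂ[[s]]-module to ℂ[[s]]^μ, where μ = dim_ℂ (R/J(f)) is the Milnor number of f. -/
noncomputable section

open scoped Pointwise

variable (n : ℕ)

section Koszul

variable {N : ℕ} {S : Type*} [CommRing S]

/-- The Koszul sign of `j` relative to `T`. -/
def ksgn (S : Type*) [CommRing S] {N : ℕ} (j : Fin N) (T : Finset (Fin N)) : S :=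
  ∏ i ∈ T, (if i < j then -1 else 1)

lemma ksgn_insert (j k : Fin N) (T : Finset (Fin N)) (hk : k ∉ T) :
    ksgn S j (insert k T) = (if k < j then -1 else 1) * ksgn S j T := by
  simp [ksgn, Finset.prod_insert hk]

lemma ksgn_sq (j : Fin N) (T : Finset (Fin N)) : ksgn S j T * ksgn S j T = 1 := by
  rw [ksgn, ← Finset.prod_mul_distrib]
  apply Finset.prod_eq_one
  intro i _
  split <;> simp

lemma ksgn_erase (j : Fin N) (T : Finset (Fin N)) : ksgn S j (T.erase j) = ksgn S j T := by
  by_cases h : j ∈ T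
  · conv_rhs => rw [← Finset.insert_erase h]
    rw [ksgn_insert _ _ _ (by simp)]
    simp
  · rw [Finset.erase_eq_of_notMem h]

lemma ksgn_swap (j k : Fin N) (T : Finset (Fin N)) (hj : j ∉ T) (hk : k ∉ T) (hjk : j ≠ k) :
    ksgn S k T * ksgn S j (insert k T) = - (ksgn S j T * ksgn S k (insert j T)) := by
  rw [ksgn_insert _ _ _ hj, ksgn_insert _ _ _ hk]
  rcases lt_or_gt_of_ne hjk with h | h
  · simp [h, not_lt.2 h.le, mul_comm]
  · simp [h, not_lt.2 h.le, mul_comm]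

/-- Koszul differential on functions on finsets. -/
def kd (f : Fin N → S) (u : Finset (Fin N) → S) (T : Finset (Fin N)) : S :=
  ∑ k, if k ∈ T then 0 else ksgn S k T * f k * u (insert k T)

/-- Koszul homotopy. -/
def kh (j : Fin N) (u : Finset (Fin N) → S) (T : Finset (Fin N)) : S :=
  if j ∈ T then ksgn S j T * u (T.erase j) else 0

lemma kd_add (f : Fin N → S) (u v : Finset (Fin N) → S) : kd f (u + v) = kd f u + kd f v := by
  funext T
  simp only [kd, Pi.add_apply, ← Finset.sum_add_distrib]
  refine Finset.sum_congr rfl fun k _ => ?_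
  split <;> ring

lemma kd_smul (f : Fin N → S) (a : S) (v : Finset (Fin N) → S) : kd f (a • v) = a • kd f v := by
  funext T
  simp only [kd, Pi.smul_apply, smul_eq_mul, Finset.mul_sum]
  refine Finset.sum_congr rfl fun k _ => ?_
  split <;> ring

lemma kd_sum {ι : Type*} (s : Finset ι) (f : Fin N → S) (v : ι → Finset (Fin N) → S) :
    kd f (∑ i ∈ s, v i) = ∑ i ∈ s, kd f (v i) := by
  classical
  induction s using Finset.induction_on with
  | empty => simpa using kd_smul f 0 0
  | insert a s ha ih => rw [Finset.sum_insert ha, Finset.sum_insert ha, kd_add, ih]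

lemma kd_kd [Algebra ℂ S] (f : Fin N → S) (u : Finset (Fin N) → S) : kd f (kd f u) = 0 := by
  funext T
  have key : kd f (kd f u) T = - kd f (kd f u) T := by
    have e : kd f (kd f u) T = ∑ k, ∑ j, if k ∈ T ∨ j ∈ T ∨ j = k then 0 else
        (ksgn S k T * ksgn S j (insert k T)) * (f k * f j * u (insert j (insert k T))) := by
      unfold kd
      refine Finset.sum_congr rfl fun k _ => ?_
      by_cases hk : k ∈ T
      · simp [hk]
      · simp only [hk, if_false, false_or, Finset.mul_sum]
        refine Finset.sum_congr rfl fun j _ => ?_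
        by_cases hj : j ∈ T
        · simp [hj]
        · by_cases hjk : j = k
          · simp [hjk]
          · simp only [hj, hjk, Finset.mem_insert, or_false, if_false]
            ring
    conv_rhs => rw [e, Finset.sum_comm]
    rw [e, ← Finset.sum_neg_distrib]
    refine Finset.sum_congr rfl fun k _ => ?_
    rw [← Finset.sum_neg_distrib]
    refine Finset.sum_congr rfl fun j _ => ?_
    by_cases hk : k ∈ T
    · simp [hk]
    by_cases hj : j ∈ T
    · simp [hj]
    by_cases hjk : j = k
    · simp [hjk]
    have hkj : ¬ k = j := fun h => hjk h.symm
    simp only [hk, hj, hjk, hkj, or_false, if_false]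
    rw [ksgn_swap j k T hj hk hjk, Finset.insert_comm j k]
    ring
  have h2 : (2 : S) * kd f (kd f u) T = 0 := by linear_combination key
  have : (algebraMap ℂ S (1/2)) * ((2 : S) * kd f (kd f u) T) = 0 := by rw [h2, mul_zero]
  rw [← mul_assoc, show (2 : S) = algebraMap ℂ S 2 from (map_ofNat _ 2).symm, ← map_mul] at this
  simpa using this

lemma kd_kh (f : Fin N → S) (j : Fin N) (u : Finset (Fin N) → S) :
    kd f (kh j u) = f j • u - kh j (kd f u) := by
  funext T
  simp only [Pi.sub_apply, Pi.smul_apply, smul_eq_mul]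
  by_cases hj : j ∈ T
  · have e : kh j (kd f u) T = ksgn S j T * kd f u (T.erase j) := by simp [kh, hj]
    rw [e]
    unfold kd
    rw [← Finset.add_sum_erase _ _ (Finset.mem_univ j),
      ← Finset.add_sum_erase Finset.univ (fun k => if k ∈ T.erase j then 0 else
        ksgn S k (T.erase j) * f k * u (insert k (T.erase j))) (Finset.mem_univ j)]
    simp only [hj, if_true, Finset.mem_erase, ne_eq, not_true, false_and, if_false,
      Finset.insert_erase, ksgn_erase, zero_add]
    have : ∑ x ∈ Finset.univ.erase j, (if x ∈ T then 0 else
        ksgn S x T * f x * kh j u (insert x T)) =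
      - (ksgn S j T * ∑ x ∈ Finset.univ.erase j, (if ¬ x = j ∧ x ∈ T then 0 else
        ksgn S x (T.erase j) * f x * u (insert x (T.erase j)))) := by
      rw [Finset.mul_sum, ← Finset.sum_neg_distrib]
      refine Finset.sum_congr rfl fun x hx => ?_
      have hxj : x ≠ j := by simpa using hx
      by_cases hxT : x ∈ T
      · simp [hxT, hxj]
      · have h1 : (insert x T).erase j = insert x (T.erase j) := by
          rw [Finset.erase_insert_of_ne hxj]
        have h2 := ksgn_swap (S := S) j x (T.erase j) (by simp) (by simp [hxT]) hxj.symm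
        rw [Finset.insert_erase hj] at h2
        have h3 : ksgn S j (insert x T) = ksgn S j (insert x (T.erase j)) := by
          rw [← h1, ksgn_erase]
        have h4 := ksgn_sq (S := S) j T
        have h5 : ksgn S j (T.erase j) = ksgn S j T := ksgn_erase _ _
        have h6 : ksgn S x T * ksgn S j (insert x T) =
            - (ksgn S j T * ksgn S x (T.erase j)) := by
          rw [h3, ksgn_insert _ _ _ (by simp [hxT] : x ∉ T.erase j), h5]
          rw [ksgn_insert _ _ _ (by simp [hxT] : x ∉ T.erase j), h5] at h2
          have hc : ((if x < j then -1 else 1 : S)) * (if x < j then -1 else 1) = 1 := by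
            split <;> simp
          linear_combination ((if x < j then -1 else 1 : S)) * h2 -
            (ksgn S x (T.erase j) * ksgn S j T) * hc
        simp only [hxT, and_false, if_false, kh, Finset.mem_insert, hj, or_true, if_true, h1]
        linear_combination (f x * u (insert x (T.erase j))) * h6
    rw [this]
    linear_combination (f j * u T) * ksgn_sq (S := S) j T
  · have e : kh j (kd f u) T = 0 := by simp [kh, hj]
    rw [e, sub_zero]
    unfold kd
    rw [Finset.sum_eq_single j]
    · simp only [hj, if_false, kh, Finset.mem_insert, true_or, if_true, Finset.erase_insert hj]
      rw [ksgn_insert _ _ _ hj]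
      simp only [lt_irrefl, if_false, one_mul]
      linear_combination (f j * u T) * ksgn_sq (S := S) j T
    · intro k _ hk
      simp [kh, hj, hk.symm]
    · simp

end Koszul


section Box

/-- Series all of whose coefficients at `α` with `α i < m` for all `i < k` vanish. -/
def boxI (n m k : ℕ) : Ideal (R' n) where
  carrier := {z | ∀ α : Fin n →₀ ℕ, (∀ i : Fin n, i.val < k → α i < m) →
    MvPowerSeries.coeff α z = 0}
  zero_mem' := by intro α _; simp
  add_mem' := by
    intro a b ha hb α hα
    rw [map_add, ha α hα, hb α hα, add_zero]
  smul_mem' := by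
    intro c z hz α hα
    rw [smul_eq_mul, MvPowerSeries.coeff_mul]
    refine Finset.sum_eq_zero fun p hp => ?_
    rw [hz p.2, mul_zero]
    intro i hi
    have h := Finset.HasAntidiagonal.mem_antidiagonal.1 hp
    have := hα i hi
    rw [← h, Finsupp.add_apply] at this
    omega

lemma mem_boxI {n m k : ℕ} {z : R' n} : z ∈ boxI n m k ↔
    ∀ α : Fin n →₀ ℕ, (∀ i : Fin n, i.val < k → α i < m) → MvPowerSeries.coeff α z = 0 := Iff.rfl

lemma boxI_zero {n m : ℕ} {z : R' n} (hz : z ∈ boxI n m 0) : z = 0 := by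
  ext α
  exact hz α (by simp)

lemma boxI_reg {n m k : ℕ} (hk : k < n) {z : R' n}
    (hz : (MvPowerSeries.X ⟨k, hk⟩ : R' n) ^ m * z ∈ boxI n m k) : z ∈ boxI n m k := by
  intro α hα
  have := hz (Finsupp.single ⟨k, hk⟩ m + α) (by
    intro i hi
    have : (⟨k, hk⟩ : Fin n) ≠ i := by rintro rfl; simp at hi
    simpa [Finsupp.single_eq_of_ne' this] using hα i hi)
  rwa [MvPowerSeries.X_pow_eq, MvPowerSeries.coeff_add_monomial_mul, one_mul] at this

lemma boxI_split {n m k : ℕ} (hk : k < n) {z : R' n} (hz : z ∈ boxI n m (k + 1)) :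
    ∃ t : R' n, z - (MvPowerSeries.X ⟨k, hk⟩ : R' n) ^ m * t ∈ boxI n m k := by
  obtain ⟨t, ht⟩ : ∃ t : R' n, ∀ α, MvPowerSeries.coeff α t =
      MvPowerSeries.coeff (Finsupp.single ⟨k, hk⟩ m + α) z :=
    ⟨fun α => MvPowerSeries.coeff (Finsupp.single ⟨k, hk⟩ m + α) z, fun _ => rfl⟩
  refine ⟨t, ?_⟩
  intro α hα
  rw [map_sub, MvPowerSeries.X_pow_eq, MvPowerSeries.coeff_monomial_mul]
  split
  · next h =>
    rw [one_mul, ht, add_tsub_cancel_of_le h, sub_self]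
  · next h =>
    rw [sub_zero]
    apply hz
    intro i hi
    rcases Nat.lt_succ_iff_lt_or_eq.1 hi with h' | h'
    · exact hα i h'
    · by_contra hc
      apply h
      rw [Finsupp.single_le_iff]
      have : (⟨k, hk⟩ : Fin n) = i := Fin.ext h'.symm
      rw [this]; omega

lemma boxI_mono {n m k : ℕ} : boxI n m k ≤ boxI n m (k + 1) :=
  fun _ hz α hα => hz α fun i hi => hα i (by omega)

lemma X_pow_mem_boxI {n m k : ℕ} (hk : k < n) :
    (MvPowerSeries.X ⟨k, hk⟩ : R' n) ^ m ∈ boxI n m (k + 1) := by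
  classical
  intro α hα
  rw [MvPowerSeries.coeff_X_pow, if_neg]
  rintro rfl
  simpa using hα ⟨k, hk⟩ (by simp)

lemma boxI_le {n m : ℕ} (J : Ideal (R' n)) (hJ : ∀ i, (MvPowerSeries.X i : R' n) ^ m ∈ J) (k : ℕ)
    (hk : k ≤ n) : boxI n m k ≤ J := by
  induction k with
  | zero => intro z hz; rw [boxI_zero hz]; exact J.zero_mem
  | succ k ih =>
    intro z hz
    obtain ⟨t, ht⟩ := boxI_split hk hz
    have := J.add_mem (ih (by omega) ht) (J.mul_mem_right t (hJ ⟨k, hk⟩))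
    simpa using this

lemma finite_quot {n m : ℕ} (J : Ideal (R' n)) (hJ : ∀ i, (MvPowerSeries.X i : R' n) ^ m ∈ J) :
    Module.Finite ℂ (R' n ⧸ J) := by
  let L : R' n →ₗ[ℂ] ((Fin n → Fin m) → ℂ) :=
    LinearMap.pi fun b => MvPowerSeries.coeff (Finsupp.equivFunOnFinite.symm fun i => (b i : ℕ))
  have hL : LinearMap.ker L ≤ LinearMap.ker (Ideal.Quotient.mkₐ ℂ J).toLinearMap := by
    intro z hz
    have : z ∈ boxI n m n := by
      intro α hα
      have h := congrFun (LinearMap.mem_ker.1 hz) (fun i => ⟨α i, hα i i.2⟩)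
      simp only [L, LinearMap.pi_apply, Pi.zero_apply] at h
      convert h using 2
      ext i
      simp
    have h2 := boxI_le J hJ n le_rfl this
    simpa [LinearMap.mem_ker, Ideal.Quotient.eq_zero_iff_mem] using h2
  have f1 : Module.Finite ℂ (R' n ⧸ LinearMap.ker L) :=
    Module.Finite.equiv (LinearMap.quotKerEquivRange L).symm
  refine Module.Finite.of_surjective ((LinearMap.ker L).liftQ
    (Ideal.Quotient.mkₐ ℂ J).toLinearMap hL) ?_
  intro y
  obtain ⟨z, rfl⟩ := Ideal.Quotient.mk_surjective y
  exact ⟨Submodule.Quotient.mk z, by simp⟩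

/-- Values of `kd` stay in an ideal. -/
lemma kd_mem {N : ℕ} {S : Type*} [CommRing S] (I : Ideal S) (f : Fin N → S)
    (u : Finset (Fin N) → S) (hu : ∀ T, u T ∈ I) (T) : kd f u T ∈ I := by
  refine I.sum_mem fun k _ => ?_
  split
  · exact I.zero_mem
  · exact I.mul_mem_left _ (hu _)

lemma koszul_exact {n m : ℕ} (f : Fin n → R' n)
    (hX : ∀ i, (MvPowerSeries.X i : R' n) ^ m ∈ Ideal.span (Set.range f)) (d k : ℕ)
    (hdk : d + k = n) (p : ℕ) (hp : k < p) (u : Finset (Fin n) → R' n)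
    (hu : ∀ T, T.card ≠ p → u T = 0) (hdu : ∀ T, kd f u T ∈ boxI n m k) :
    ∃ t : Finset (Fin n) → R' n, (∀ T, T.card ≠ p + 1 → t T = 0) ∧
      ∀ T, u T - kd f t T ∈ boxI n m k := by
  induction d generalizing k p u with
  | zero =>
    refine ⟨0, by simp, fun T => ?_⟩
    have h0 : kd f (0 : Finset (Fin n) → R' n) = 0 := by simpa using kd_smul f 0 0
    rw [h0, hu T (by have := Finset.card_le_univ T; simp at this; omega)]
    simp
  | succ d ih =>
    have hk : k < n := by omega
    obtain ⟨g, hg⟩ := Ideal.mem_span_range_iff_exists_fun.1 (hX ⟨k, hk⟩)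
    set a : R' n := (MvPowerSeries.X ⟨k, hk⟩ : R' n) ^ m with ha
    set w : Finset (Fin n) → R' n := ∑ j, g j • kh j u with hw
    have hdw : kd f w = a • u - ∑ j, g j • kh j (kd f u) := by
      rw [hw, kd_sum]
      simp only [kd_smul, kd_kh, smul_sub, Finset.sum_sub_distrib]
      rw [← hg, Finset.sum_smul]
      simp only [smul_smul]
    have hhd : ∀ T, (∑ j, g j • kh j (kd f u)) T ∈ boxI n m k := by
      intro T
      rw [Finset.sum_apply]
      refine Ideal.sum_mem _ fun j _ => ?_
      simp only [Pi.smul_apply, smul_eq_mul, kh]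
      refine Ideal.mul_mem_left _ _ ?_
      split
      · exact Ideal.mul_mem_left _ _ (hdu _)
      · exact Ideal.zero_mem _
    obtain ⟨v, -, hv⟩ := ih (k + 1) (by omega) (p + 1) (by omega) w (by
        intro T hT
        rw [hw, Finset.sum_apply]
        refine Finset.sum_eq_zero fun j _ => ?_
        simp only [Pi.smul_apply, smul_eq_mul, kh]
        split
        · next h =>
          rw [hu, mul_zero, mul_zero]
          rw [Finset.card_erase_of_mem h]
          have := Finset.card_pos.2 ⟨j, h⟩
          omega
        · simp) (by
        intro T
        rw [hdw]
        refine Ideal.sub_mem _ ?_ (boxI_mono (hhd T))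
        exact Ideal.mul_mem_right _ _ (X_pow_mem_boxI hk))
    choose t' ht' using fun T => boxI_split hk (hv T)
    set y : Finset (Fin n) → R' n := w - kd f v - a • t' with hy
    have hyI : ∀ T, y T ∈ boxI n m k := ht'
    let t : Finset (Fin n) → R' n := fun T => if T.card = p + 1 then t' T else 0
    refine ⟨t, fun T hT => by simp [t, hT], fun T => ?_⟩
    by_cases hT : T.card = p
    · have e1 : kd f t T = kd f t' T := by
        unfold kd
        refine Finset.sum_congr rfl fun j _ => ?_
        split
        · rfl
        · next h =>
          have : (insert j T).card = p + 1 := by rw [Finset.card_insert_of_notMem h, hT]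
          simp [t, this]
      rw [e1]
      apply boxI_reg hk
      have hw' : w = kd f v + a • t' + y := by rw [hy]; abel
      have h1 : kd f w = a • kd f t' + kd f y := by
        rw [hw', kd_add, kd_add, kd_kd, zero_add, kd_smul]
      rw [hdw] at h1
      have h2 := congrFun h1 T
      simp only [Pi.sub_apply, Pi.add_apply, Pi.smul_apply, smul_eq_mul] at h2
      have h3 : a * (u T - kd f t' T) = kd f y T + (∑ j, g j • kh j (kd f u)) T := by
        linear_combination h2
      rw [h3]
      exact Ideal.add_mem _ (kd_mem _ _ _ hyI _) (hhd T)
    · have e1 : kd f t T = 0 := by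
        unfold kd
        refine Finset.sum_eq_zero fun j _ => ?_
        split
        · rfl
        · next h =>
          have : (insert j T).card ≠ p + 1 := by rw [Finset.card_insert_of_notMem h]; omega
          simp [t, this]
      rw [e1, hu T hT]
      simp

lemma koszul_syz {n m : ℕ} (f : Fin n → R' n)
    (hX : ∀ i, (MvPowerSeries.X i : R' n) ^ m ∈ Ideal.span (Set.range f))
    (q : Fin n → R' n) (hq : ∑ j, f j * q j = 0) :
    ∃ a : Fin n → Fin n → R' n, (∀ i j, a i j = - a j i) ∧ ∀ j, q j = ∑ k, f k * a j k := by
  let u : Finset (Fin n) → R' n := fun T => if T.card = 1 then ∑ j ∈ T, q j else 0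
  have hu1 : ∀ j, u {j} = q j := fun j => by simp [u]
  obtain ⟨t, -, ht⟩ := koszul_exact (m := m) f hX n 0 (by omega) 1 (by omega) u
    (fun T hT => by simp [u, hT]) (by
      intro T
      have : kd f u T = 0 := by
        by_cases hT : T = ∅
        · subst hT
          rw [← hq]
          unfold kd
          refine Finset.sum_congr rfl fun j _ => ?_
          simp [hu1, ksgn]
        · unfold kd
          refine Finset.sum_eq_zero fun j _ => ?_
          split
          · rfl
          · next h =>
            have : (insert j T).card ≠ 1 := by
              rw [Finset.card_insert_of_notMem h]
              have := Finset.card_pos.2 (Finset.nonempty_iff_ne_empty.2 hT)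
              omega
            simp [u, this]
      rw [this]; exact Ideal.zero_mem _)
  refine ⟨fun j k => if k = j then 0 else (if j < k then -1 else 1) * t {k, j}, ?_, ?_⟩
  · intro i j
    rcases lt_trichotomy i j with h | h | h
    · simp [h, h.ne, h.ne', not_lt.2 h.le, Finset.pair_comm]
    · simp [h]
    · simp [h, h.ne, h.ne', not_lt.2 h.le, Finset.pair_comm]
  · intro j
    have := boxI_zero (ht {j})
    rw [hu1, sub_eq_zero] at this
    rw [this]
    unfold kd
    refine Finset.sum_congr rfl fun k _ => ?_
    by_cases h : k = j
    · simp [h]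
    · simp only [Finset.mem_singleton, h, if_false, ksgn, Finset.prod_singleton]
      ring

end Box


section Slice

/-- The coefficient of `s ^ k`. -/
def slice {n : ℕ} (k : ℕ) : A' n →ₗ[ℂ] R' n where
  toFun a := fun α => MvPowerSeries.coeff (Finsupp.cons k α) a
  map_add' a b := by ext α; exact map_add _ _ _
  map_smul' c a := by ext α; exact (MvPowerSeries.coeff (Finsupp.cons k α)).map_smul c a

lemma coeff_slice {n : ℕ} (k : ℕ) (a : A' n) (α : Fin n →₀ ℕ) :
    MvPowerSeries.coeff α (slice k a) = MvPowerSeries.coeff (Finsupp.cons k α) a := rfl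

lemma slice_ext {n : ℕ} {a b : A' n} (h : ∀ k, slice k a = slice k b) : a = b := by
  ext β
  have := congrArg (MvPowerSeries.coeff β.tail) (h (β 0))
  rwa [coeff_slice, coeff_slice, Finsupp.cons_tail] at this

lemma exists_slice {n : ℕ} (g : ℕ → R' n) : ∃ a : A' n, ∀ k, slice k a = g k := by
  obtain ⟨a, ha⟩ : ∃ a : A' n, ∀ β, MvPowerSeries.coeff β a =
      MvPowerSeries.coeff β.tail (g (β 0)) :=
    ⟨fun β => MvPowerSeries.coeff β.tail (g (β 0)), fun _ => rfl⟩
  refine ⟨a, fun k => ?_⟩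
  ext α
  rw [coeff_slice, ha, Finsupp.tail_cons, Finsupp.cons_zero]

lemma slice_inclR_mul {n : ℕ} (g : R' n) (a : A' n) (k : ℕ) :
    slice k (inclR n g * a) = g * slice k a := by
  classical
  ext α
  rw [coeff_slice, MvPowerSeries.coeff_mul, MvPowerSeries.coeff_mul]
  symm
  refine Finset.sum_of_injOn (fun p => (Finsupp.cons 0 p.1, Finsupp.cons k p.2)) ?_ ?_ ?_ ?_
  · rintro ⟨a, b⟩ - ⟨a', b'⟩ - h
    simp only [Prod.mk.injEq] at h
    rw [(Finsupp.cons_injective2 h.1).2, (Finsupp.cons_injective2 h.2).2]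
  · rintro ⟨a, b⟩ h
    have h := Finset.HasAntidiagonal.mem_antidiagonal.1 (Finset.mem_coe.1 h)
    refine Finset.mem_coe.2 (Finset.HasAntidiagonal.mem_antidiagonal.2 ?_)
    simp only at h ⊢
    rw [← h]
    ext i
    refine Fin.cases ?_ (fun i => ?_) i <;> simp
  · rintro ⟨b, c⟩ h hn
    have h := Finset.HasAntidiagonal.mem_antidiagonal.1 h
    simp only at h ⊢
    rw [coeff_inclR]
    split
    · next h0 =>
      exfalso
      apply hn
      refine ⟨(b.tail, c.tail), ?_, ?_⟩
      · refine Finset.mem_coe.2 (Finset.HasAntidiagonal.mem_antidiagonal.2 ?_)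
        ext i
        have := DFunLike.congr_fun h i.succ
        simpa [Finsupp.tail_apply] using this
      · have := DFunLike.congr_fun h 0
        simp [h0] at this
        rw [← this]
        simp only
        rw [Finsupp.cons_tail, ← h0, Finsupp.cons_tail]
    · simp
  · rintro ⟨b, c⟩ h
    rw [coeff_inclR, coeff_slice]
    simp only [Finsupp.cons_zero, if_true]
    change _ = MvPowerSeries.coeff (Finsupp.tail (Finsupp.cons 0 b)) g * _
    rw [Finsupp.tail_cons]

lemma slice_sv_mul_zero {n : ℕ} (a : A' n) : slice 0 (sv n * a) = 0 := by
  ext α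
  rw [coeff_slice, sv, MvPowerSeries.X, MvPowerSeries.coeff_monomial_mul, if_neg]
  · simp
  · intro h
    have := h 0
    simp at this

lemma slice_sv_mul_succ {n : ℕ} (a : A' n) (k : ℕ) : slice (k + 1) (sv n * a) = slice k a := by
  ext α
  have : (Finsupp.cons (k + 1) α : Fin (n + 1) →₀ ℕ) = Finsupp.single 0 1 + Finsupp.cons k α := by
    ext i
    refine Fin.cases ?_ (fun i => ?_) i
    · simp [add_comm]
    · simp
  rw [coeff_slice, sv, MvPowerSeries.X, this, MvPowerSeries.coeff_add_monomial_mul, one_mul,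
    coeff_slice]

lemma slice_pd {n : ℕ} (i : Fin n) (a : A' n) (k : ℕ) :
    slice k (pd i.succ a) = pd i (slice k a) := by
  ext α
  rw [coeff_slice, coeff_pd, coeff_pd, coeff_slice, Finsupp.cons_succ]
  congr 2
  congr 1
  ext j
  refine Fin.cases ?_ (fun j => ?_) j
  · simp
  · simp [Finsupp.single_apply]

lemma slice_toA {n : ℕ} (c : PowerSeries ℂ) (k : ℕ) :
    slice k (toA n c) = MvPowerSeries.C (PowerSeries.coeff k c) := by
  classical
  ext α
  rw [coeff_slice, MvPowerSeries.coeff_C]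
  change (if Finsupp.tail (Finsupp.cons k α) = 0 then
    PowerSeries.coeff ((Finsupp.cons k α : Fin (n + 1) →₀ ℕ) 0) c else 0) = _
  rw [Finsupp.tail_cons, Finsupp.cons_zero]

lemma slice_toA_mul {n : ℕ} (c : PowerSeries ℂ) (g : R' n) (k : ℕ) :
    slice k (toA n c * inclR n g) = PowerSeries.coeff k c • g := by
  rw [mul_comm, slice_inclR_mul, slice_toA, mul_comm, MvPowerSeries.smul_eq_C_mul]

lemma slice_FF_zero {n : ℕ} (f : R' n) (i : Fin n) (q : A' n) :
    slice 0 (FF n f i q) = pd i f * slice 0 q := by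
  rw [FF, map_sub, slice_inclR_mul, slice_sv_mul_zero, sub_zero]

lemma slice_FF_succ {n : ℕ} (f : R' n) (i : Fin n) (q : A' n) (k : ℕ) :
    slice (k + 1) (FF n f i q) = pd i f * slice (k + 1) q - pd i (slice k q) := by
  rw [FF, map_sub, slice_inclR_mul, slice_sv_mul_succ, slice_pd]

lemma pd_eq_pderiv {σ : Type*} (i : σ) (g : MvPowerSeries σ ℂ) :
    pd i g = MvPowerSeries.pderiv ℂ i g := by
  ext α
  rw [coeff_pd, MvPowerSeries.coeff_pderiv, mul_comm]

lemma pd_mul {σ : Type*} (i : σ) (a b : MvPowerSeries σ ℂ) :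
    pd i (a * b) = pd i a * b + a * pd i b := by
  simp only [pd_eq_pderiv, Derivation.leibniz, smul_eq_mul]
  ring

lemma pd_sum {σ ι : Type*} (i : σ) (s : Finset ι) (a : ι → MvPowerSeries σ ℂ) :
    pd i (∑ j ∈ s, a j) = ∑ j ∈ s, pd i (a j) := by
  simp only [pd_eq_pderiv, map_sum]

lemma pd_neg {σ : Type*} (i : σ) (a : MvPowerSeries σ ℂ) : pd i (-a) = - pd i a := by
  simp only [pd_eq_pderiv, map_neg]

lemma pd_comm {σ : Type*} (i j : σ) (a : MvPowerSeries σ ℂ) : pd i (pd j a) = pd j (pd i a) := by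
  classical
  by_cases h : i = j
  · rw [h]
  ext α
  simp only [coeff_pd, Finsupp.add_apply, Finsupp.single_eq_of_ne h,
    Finsupp.single_eq_of_ne (Ne.symm h), add_zero]
  rw [add_right_comm α]
  ring

/-- A double sum of an antisymmetric family vanishes. -/
lemma sum_antisymm {n : ℕ} (c : Fin n → Fin n → R' n) (hc : ∀ i j, c i j = - c j i) :
    ∑ i, ∑ j, c i j = 0 := by
  have h : ∑ i, ∑ j, c i j = - ∑ i, ∑ j, c i j := by
    conv_rhs => rw [Finset.sum_comm]
    rw [← Finset.sum_neg_distrib]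
    refine Finset.sum_congr rfl fun i _ => ?_
    rw [← Finset.sum_neg_distrib]
    exact Finset.sum_congr rfl fun j _ => hc i j
  ext α
  have h2 := congrArg (MvPowerSeries.coeff α) h
  rw [map_neg] at h2
  rw [self_eq_neg.1 h2, map_zero]

/-- One step of the uniqueness argument. -/
lemma shift_step {n m : ℕ} (f : R' n)
    (hX : ∀ i, (MvPowerSeries.X i : R' n) ^ m ∈ Jf n f)
    (g : ℕ → R' n) (q : ℕ → Fin n → R' n)
    (h0 : ∑ j, pd j f * q 0 j = 0)
    (hs : ∀ k, g (k + 1) = ∑ j, pd j f * q (k + 1) j - ∑ j, pd j (q k j)) :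
    ∃ q' : ℕ → Fin n → R' n, g 1 = ∑ j, pd j f * q' 0 j ∧
      ∀ k, g (k + 1 + 1) = ∑ j, pd j f * q' (k + 1) j - ∑ j, pd j (q' k j) := by
  obtain ⟨a, ha, hq⟩ := koszul_syz (m := m) (fun j => pd j f) hX (q 0) h0
  refine ⟨fun k j => if k = 0 then q 1 j + ∑ l, pd l (a j l) else q (k + 1) j, ?_, ?_⟩
  · rw [hs 0]
    simp only [if_true, mul_add, Finset.sum_add_distrib, zero_add]
    have e1 : ∑ j, pd j (q 0 j) =
        ∑ j, ∑ l, pd j (pd l f) * a j l + ∑ j, ∑ l, pd l f * pd j (a j l) := by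
      rw [← Finset.sum_add_distrib]
      refine Finset.sum_congr rfl fun j _ => ?_
      rw [hq, pd_sum, ← Finset.sum_add_distrib]
      exact Finset.sum_congr rfl fun l _ => pd_mul _ _ _
    have e2 : ∑ j, ∑ l, pd j (pd l f) * a j l = 0 :=
      sum_antisymm _ fun i j => by rw [ha i j, pd_comm]; ring
    have e3 : ∑ j, ∑ l, pd l f * pd j (a j l) = - ∑ j, pd j f * ∑ l, pd l (a j l) := by
      rw [Finset.sum_comm, ← Finset.sum_neg_distrib]
      refine Finset.sum_congr rfl fun j _ => ?_
      rw [Finset.mul_sum, ← Finset.sum_neg_distrib]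
      refine Finset.sum_congr rfl fun l _ => ?_
      rw [ha l j, pd_neg]; ring
    rw [e1, e2, e3]; ring
  · intro k
    rw [hs (k + 1)]
    rcases k with _ | k
    · simp only [if_true, pd_add, Finset.sum_add_distrib, pd_sum]
      rw [sum_antisymm (fun j l => pd j (pd l (a j l))) fun i j => by
        rw [ha i j, pd_neg, pd_neg, pd_comm]]
      simp
    · simp

lemma uniq_aux {n m μ : ℕ} (f : R' n)
    (hX : ∀ i, (MvPowerSeries.X i : R' n) ^ m ∈ Jf n f)
    (b : Fin μ → R' n)
    (hb : ∀ c : Fin μ → ℂ, ∑ i, c i • b i ∈ Jf n f → c = 0)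
    (k : ℕ) (c : ℕ → Fin μ → ℂ) (q : ℕ → Fin n → R' n)
    (h0 : ∑ i, c 0 i • b i = ∑ j, pd j f * q 0 j)
    (hs : ∀ k, ∑ i, c (k + 1) i • b i = ∑ j, pd j f * q (k + 1) j - ∑ j, pd j (q k j)) :
    c k = 0 := by
  have hc0 : c 0 = 0 := by
    apply hb
    rw [h0]
    exact Ideal.sum_mem _ fun j _ => Ideal.mul_mem_right _ _ (Ideal.subset_span ⟨j, rfl⟩)
  induction k generalizing c q with
  | zero => exact hc0
  | succ k ih =>
    have h0' : ∑ j, pd j f * q 0 j = 0 := by rw [← h0, hc0]; simp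
    obtain ⟨q', h1, h2⟩ := shift_step f hX (fun k => ∑ i, c k i • b i) q h0' hs
    refine ih (fun k => c (k + 1)) q' h1 h2 ?_
    apply hb
    simp only [zero_add] 
    rw [show ∑ i, c 1 i • b i = _ from h1]
    exact Ideal.sum_mem _ fun j _ => Ideal.mul_mem_right _ _ (Ideal.subset_span ⟨j, rfl⟩)

lemma mem_Mset_iff {n : ℕ} (f : R' n) (a : A' n) : a ∈ Mset n f ↔
    ∃ q : ℕ → Fin n → R' n, slice 0 a = ∑ j, pd j f * q 0 j ∧
      ∀ k, slice (k + 1) a = ∑ j, pd j f * q (k + 1) j - ∑ j, pd j (q k j) := by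
  constructor
  · rintro ⟨q, rfl⟩
    refine ⟨fun k j => slice k (q j), ?_, fun k => ?_⟩
    · simp only [map_sum, slice_FF_zero]
    · simp only [map_sum, slice_FF_succ, Finset.sum_sub_distrib]
  · rintro ⟨q, h0, hs⟩
    choose Q hQ using fun j => exists_slice (fun k => q k j)
    refine ⟨Q, slice_ext fun k => ?_⟩
    rcases k with _ | k
    · simp only [map_sum, slice_FF_zero, hQ, h0]
    · simp only [map_sum, slice_FF_succ, hQ, hs, Finset.sum_sub_distrib]

end Slice

/-- **Proposition 21 (freeness of the formal Brieskorn lattice)**: the formal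
Brieskorn lattice `H = A/M` is a free `ℂ[[s]]`-module of rank `μ`, where
`μ = dim_ℂ (R/J(f))` is the Milnor number: there are `μ` elements of `A` whose
classes form a `ℂ[[s]]`-basis of `H`, i.e. every element of `A` is congruent
modulo `M` to a unique `ℂ[[s]]`-linear combination of them. -/
theorem brieskorn_free (n : ℕ) (hn : 1 ≤ n) (f : R' n)
    (hf0 : MvPowerSeries.constantCoeff f = 0)
    (m : ℕ) (hm : 1 ≤ m) (hiso : mx n ^ m ≤ Jf n f) :
    ∃ b : Fin (Module.finrank ℂ (R' n ⧸ Jf n f)) → A' n,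
      ∀ p : A' n,
        ∃! c : Fin (Module.finrank ℂ (R' n ⧸ Jf n f)) → PowerSeries ℂ,
          p - ∑ i, toA n (c i) * b i ∈ Mset n f := by
  have hX : ∀ i, (MvPowerSeries.X i : R' n) ^ m ∈ Jf n f := fun i =>
    hiso (Ideal.pow_mem_pow (Ideal.subset_span (Set.mem_range_self i)) m)
  have hfin := finite_quot (Jf n f) hX
  let B := Module.finBasis ℂ (R' n ⧸ Jf n f)
  choose b hb using fun i => Ideal.Quotient.mk_surjective (B i)
  have hmk : ∀ c : Fin (Module.finrank ℂ (R' n ⧸ Jf n f)) → ℂ,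
      Ideal.Quotient.mk (Jf n f) (∑ i, c i • b i) = ∑ i, c i • B i := by
    intro c
    rw [map_sum]
    refine Finset.sum_congr rfl fun i _ => ?_
    rw [← hb i]
    rfl
  have hind : ∀ c : Fin (Module.finrank ℂ (R' n ⧸ Jf n f)) → ℂ,
      ∑ i, c i • b i ∈ Jf n f → c = 0 := by
    intro c hc
    have h1 := Ideal.Quotient.eq_zero_iff_mem.2 hc
    rw [hmk] at h1
    funext i
    exact Fintype.linearIndependent_iff.1 B.linearIndependent c h1 i
  have hspan : ∀ z : R' n, ∃ c : Fin (Module.finrank ℂ (R' n ⧸ Jf n f)) → ℂ,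
      ∃ q : Fin n → R' n, z - ∑ i, c i • b i = ∑ j, pd j f * q j := by
    intro z
    refine ⟨fun i => B.repr (Ideal.Quotient.mk (Jf n f) z) i, ?_⟩
    have h1 : z - ∑ i, B.repr (Ideal.Quotient.mk (Jf n f) z) i • b i ∈ Jf n f := by
      rw [← Ideal.Quotient.eq_zero_iff_mem, map_sub, hmk, B.sum_repr, sub_self]
    obtain ⟨q, hq⟩ := Ideal.mem_span_range_iff_exists_fun.1 h1
    exact ⟨q, by rw [← hq]; exact Finset.sum_congr rfl fun j _ => mul_comm _ _⟩
  choose cc qq hcq using hspan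
  refine ⟨fun i => inclR n (b i), fun p => ?_⟩
  have hsl : ∀ (c : Fin (Module.finrank ℂ (R' n ⧸ Jf n f)) → PowerSeries ℂ) (k : ℕ),
      slice k (p - ∑ i, toA n (c i) * inclR n (b i)) =
        slice k p - ∑ i, PowerSeries.coeff k (c i) • b i := by
    intro c k
    simp only [map_sub, map_sum, slice_toA_mul]
  -- the recursively constructed remainders
  let z : ℕ → R' n := fun k => Nat.rec (slice 0 p)
    (fun k zk => slice (k + 1) p + ∑ j, pd j (qq zk j)) k
  have hz : ∀ k, z (k + 1) = slice (k + 1) p + ∑ j, pd j (qq (z k) j) := fun k => rfl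
  let c₀ : Fin (Module.finrank ℂ (R' n ⧸ Jf n f)) → PowerSeries ℂ :=
    fun i => PowerSeries.mk fun k => cc (z k) i
  have hc₀ : p - ∑ i, toA n (c₀ i) * inclR n (b i) ∈ Mset n f := by
    rw [mem_Mset_iff]
    refine ⟨fun k => qq (z k), ?_, fun k => ?_⟩
    · rw [hsl, ← hcq]
      simp only [c₀, PowerSeries.coeff_mk]
      rfl
    · rw [hsl, ← hcq, hz]
      simp only [c₀, PowerSeries.coeff_mk, hz]
      ring
  refine ⟨c₀, hc₀, fun c hc => ?_⟩
  have hsub := (Msub n f).sub_mem (x := p - ∑ i, toA n (c₀ i) * inclR n (b i))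
    (y := p - ∑ i, toA n (c i) * inclR n (b i)) hc₀ hc
  obtain ⟨q, h0, hs⟩ := (mem_Mset_iff f _).1 hsub
  have key : ∀ k, slice k ((p - ∑ i, toA n (c₀ i) * inclR n (b i)) -
      (p - ∑ i, toA n (c i) * inclR n (b i))) =
      ∑ i, (PowerSeries.coeff k (c i) - PowerSeries.coeff k (c₀ i)) • b i := by
    intro k
    rw [map_sub, hsl, hsl]
    simp only [sub_smul, Finset.sum_sub_distrib]
    ring
  simp only [key] at h0 hs
  funext i
  ext k
  have := uniq_aux f hX b hind k
    (fun k i => PowerSeries.coeff k (c i) - PowerSeries.coeff k (c₀ i)) q h0 hs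
  exact sub_eq_zero.1 (congrFun this i)
end
end
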